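/- The blow-up solution with harmonic potential solves the equation: if Q is a smooth solution of the ground state equation, then u(t,x) = (ωδ/sin ω(τ−t))^{n/2} e^{iθ + iδ²ω cos(ωt)/(cos(ωτ) sin ω(τ−t)) − i(ω/2)|x/cos(ωt) − x₁|² cos(ωt)cos(ωτ)/sin ω(τ−t) − iω(|x|²/2)tan(ωt)} Q(ωδ((x − x₁cos ωt)/sin ω(τ−t) − x₀/ω)) satisfies i∂ₜu + (1/2)Δu = (ω²|x|²/2)u + λ|u|^{4/n}u for 0 < t < τ. -/

import Mathlib

/-- The Laplacian of a complex-valued function on `ℝⁿ`. -/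
noncomputable def laplacianC {n : ℕ} (f : EuclideanSpace ℝ (Fin n) → ℂ)
    (x : EuclideanSpace ℝ (Fin n)) : ℂ :=
  ∑ i : Fin n, fderiv ℝ (fun y => fderiv ℝ f y (EuclideanSpace.single i 1)) x
    (EuclideanSpace.single i 1)

/-- The Laplacian of a real-valued function on `ℝⁿ`. -/
noncomputable def laplacianR {n : ℕ} (f : EuclideanSpace ℝ (Fin n) → ℝ)
    (x : EuclideanSpace ℝ (Fin n)) : ℝ :=
  ∑ i : Fin n, fderiv ℝ (fun y => fderiv ℝ f y (EuclideanSpace.single i 1)) x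
    (EuclideanSpace.single i 1)

lemma aux_fderiv {n : ℕ} (K : ℂ) (φ : EuclideanSpace ℝ (Fin n) → ℝ)
    (g : EuclideanSpace ℝ (Fin n) → ℂ) (x v : EuclideanSpace ℝ (Fin n))
    (φ' : EuclideanSpace ℝ (Fin n) →L[ℝ] ℝ) (g' : EuclideanSpace ℝ (Fin n) →L[ℝ] ℂ)
    (hφ : HasFDerivAt φ φ' x) (hg : HasFDerivAt g g' x) :
    fderiv ℝ (fun y => K * Complex.exp (Complex.I * (φ y : ℂ)) * g y) x v
      = K * Complex.exp (Complex.I * (φ x : ℂ)) *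
        (Complex.I * (φ' v : ℂ) * g x + g' v) := by
  have h1 : HasFDerivAt (fun y => (φ y : ℂ)) (Complex.ofRealCLM.comp φ') x :=
    Complex.ofRealCLM.hasFDerivAt.comp x hφ
  have h2 := (((h1.const_mul Complex.I).cexp).const_mul K).mul hg
  rw [show (fun y => K * Complex.exp (Complex.I * (φ y : ℂ)) * g y) =
    (fun y => K * Complex.exp (Complex.I * (φ y : ℂ))) * g from rfl, h2.fderiv]
  simp
  ring

lemma aux_lap {n : ℕ} (K : ℂ) (p b k : ℝ) (v w : EuclideanSpace ℝ (Fin n))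
    (Q : EuclideanSpace ℝ (Fin n) → ℝ) (hQ : ContDiff ℝ (⊤ : ℕ∞) Q)
    (x : EuclideanSpace ℝ (Fin n)) :
    laplacianC (fun y => K * Complex.exp (Complex.I * ((p + b * ‖y‖ ^ 2 + inner ℝ v y : ℝ) : ℂ))
        * (Q (k • y + w) : ℂ)) x
      = K * Complex.exp (Complex.I * ((p + b * ‖x‖ ^ 2 + inner ℝ v x : ℝ) : ℂ)) *
        ((k : ℂ) ^ 2 * (laplacianR Q (k • x + w) : ℂ)
          + 2 * Complex.I * k * (fderiv ℝ Q (k • x + w) ((2 * b) • x + v) : ℂ)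
          + (Complex.I * (2 * b * n) - ((‖(2 * b) • x + v‖ ^ 2 : ℝ) : ℂ)) * (Q (k • x + w) : ℂ)) := by
  have hφ : ∀ y : EuclideanSpace ℝ (Fin n),
      HasFDerivAt (fun y => p + b * ‖y‖ ^ 2 + inner ℝ v y)
        (innerSL ℝ ((2 * b) • y + v)) y := by
    intro y
    have h1 : HasFDerivAt (fun y : EuclideanSpace ℝ (Fin n) => ‖y‖ ^ 2) (2 • innerSL ℝ y) y :=
      (hasStrictFDerivAt_norm_sq y).hasFDerivAt
    have h2 := ((h1.const_mul b).const_add p).add (innerSL ℝ v).hasFDerivAt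
    refine h2.congr_fderiv ?_
    ext z
    simp [inner_add_left, inner_smul_left]
    ring
  have hlin : ∀ y : EuclideanSpace ℝ (Fin n), HasFDerivAt (fun y => k • y + w)
      (k • ContinuousLinearMap.id ℝ (EuclideanSpace ℝ (Fin n))) y := by
    intro y
    exact ((hasFDerivAt_id y).const_smul k).add_const w
  have hQd : Differentiable ℝ Q := hQ.differentiable (by simp)
  have hQd' : ∀ e, Differentiable ℝ (fun y => fderiv ℝ Q y e) := by
    intro e
    have : ContDiff ℝ 1 (fderiv ℝ Q) := hQ.fderiv_right (m := 1) (by norm_cast)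
    exact (this.differentiable (by simp)).clm_apply (differentiable_const e)
  have hg : ∀ y : EuclideanSpace ℝ (Fin n), HasFDerivAt (fun y => (Q (k • y + w) : ℂ))
      (Complex.ofRealCLM.comp ((fderiv ℝ Q (k • y + w)).comp
        (k • ContinuousLinearMap.id ℝ (EuclideanSpace ℝ (Fin n))))) y := by
    intro y
    exact Complex.ofRealCLM.hasFDerivAt.comp y
      ((hQd (k • y + w)).hasFDerivAt.comp y (hlin y))
  have hg2 : ∀ e, ∀ y : EuclideanSpace ℝ (Fin n),
      HasFDerivAt (fun y => (fderiv ℝ Q (k • y + w) e : ℂ))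
      (Complex.ofRealCLM.comp ((fderiv ℝ (fun y => fderiv ℝ Q y e) (k • y + w)).comp
        (k • ContinuousLinearMap.id ℝ (EuclideanSpace ℝ (Fin n))))) y := by
    intro e y
    have h := ((hQd' e) (k • y + w)).hasFDerivAt.comp y (hlin y)
    exact Complex.ofRealCLM.hasFDerivAt.comp y h
  have key : ∀ e : EuclideanSpace ℝ (Fin n),
      fderiv ℝ (fun y => fderiv ℝ (fun y => K * Complex.exp (Complex.I *
          ((p + b * ‖y‖ ^ 2 + inner ℝ v y : ℝ) : ℂ)) * (Q (k • y + w) : ℂ)) y e) x e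
      = K * Complex.exp (Complex.I * ((p + b * ‖x‖ ^ 2 + inner ℝ v x : ℝ) : ℂ)) *
        ((k : ℂ) ^ 2 * (fderiv ℝ (fun y => fderiv ℝ Q y e) (k • x + w) e : ℂ)
          + 2 * Complex.I * k * ((inner ℝ ((2 * b) • x + v) e * fderiv ℝ Q (k • x + w) e : ℝ) : ℂ)
          + (Complex.I * (2 * b * (inner ℝ e e : ℝ))
              - ((inner ℝ ((2 * b) • x + v) e ^ 2 : ℝ) : ℂ)) * (Q (k • x + w) : ℂ)) := by
    intro e
    have e1 : (fun y => fderiv ℝ (fun y => K * Complex.exp (Complex.I *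
          ((p + b * ‖y‖ ^ 2 + inner ℝ v y : ℝ) : ℂ)) * (Q (k • y + w) : ℂ)) y e)
        = fun y => K * Complex.exp (Complex.I *
          ((p + b * ‖y‖ ^ 2 + inner ℝ v y : ℝ) : ℂ)) *
          (Complex.I * ((inner ℝ ((2 * b) • y + v) e : ℝ) : ℂ) * (Q (k • y + w) : ℂ)
            + k * (fderiv ℝ Q (k • y + w) e : ℂ)) := by
      funext y
      rw [aux_fderiv K _ _ y e _ _ (hφ y) (hg y)]
      simp [inner_add_left, real_inner_smul_left]
    have hin : HasFDerivAt (fun y : EuclideanSpace ℝ (Fin n) =>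
        ((inner ℝ ((2 * b) • y + v) e : ℝ) : ℂ))
        (Complex.ofRealCLM.comp ((2 * b) • innerSL ℝ e)) x := by
      have : HasFDerivAt (fun y : EuclideanSpace ℝ (Fin n) =>
        (inner ℝ ((2 * b) • y + v) e : ℝ)) ((2 * b) • innerSL ℝ e) x := by
        have h := ((((2 * b) • innerSL ℝ e) : EuclideanSpace ℝ (Fin n) →L[ℝ] ℝ).hasFDerivAt
          (x := x)).add_const (inner ℝ v e)
        refine h.congr_of_eventuallyEq (Filter.Eventually.of_forall fun y => ?_)
        simp [inner_add_left, inner_smul_left, real_inner_comm]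
      exact Complex.ofRealCLM.hasFDerivAt.comp x this
    have hG := ((hin.const_mul Complex.I).mul (hg x)).add ((hg2 e x).const_mul (k : ℂ))
    rw [e1]
    have := aux_fderiv K _ _ x e _ _ (hφ x) hG
    refine Eq.trans this ?_
    simp only [Pi.add_apply, Pi.mul_apply]
    congr 1
    simp only [innerSL_apply_apply, add_apply, smul_apply,
      ContinuousLinearMap.comp_apply, ContinuousLinearMap.id_apply, map_smul, smul_eq_mul,
      Complex.ofRealCLM_apply, Complex.real_smul]
    push_cast
    linear_combination ((inner ℝ ((2 * b) • x + v) e : ℝ) : ℂ) ^ 2 * (Q (k • x + w) : ℂ) * Complex.I_sq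
  have hvec : ∀ z : EuclideanSpace ℝ (Fin n), z = ∑ i, (inner ℝ z (EuclideanSpace.single i 1) : ℝ) •
      (EuclideanSpace.single i (1:ℝ) : EuclideanSpace ℝ (Fin n)) := by
    intro z
    ext j
    simp [EuclideanSpace.inner_single_right, Finset.sum_apply, Pi.single_apply]
  have hf : fderiv ℝ Q (k • x + w) ((2 * b) • x + v) = ∑ i : Fin n,
      inner ℝ ((2 * b) • x + v) (EuclideanSpace.single i 1) *
        fderiv ℝ Q (k • x + w) (EuclideanSpace.single i 1) := by
    conv_lhs => rw [hvec ((2 * b) • x + v)]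
    rw [map_sum]
    simp only [map_smul, smul_eq_mul]
  have hnorm : ‖(2 * b) • x + v‖ ^ 2 = ∑ i : Fin n,
      (inner ℝ ((2 * b) • x + v) (EuclideanSpace.single i 1) : ℝ) ^ 2 := by
    rw [EuclideanSpace.real_norm_sq_eq]
    simp [EuclideanSpace.inner_single_right]
  unfold laplacianC
  simp only [key]
  rw [hf, hnorm, laplacianR, ← Finset.mul_sum]
  congr 1
  push_cast
  simp only [Finset.sum_add_distrib, Finset.mul_sum, Finset.sum_mul, sub_mul,
    Finset.sum_sub_distrib]
  simp
  ring

/-- the explicit blow-up solution with harmonic potential solves the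
critical NLS with isotropic harmonic potential on `0 < t < τ`. -/
theorem explicit_blowup_solution_harmonic_NLS
    (n : ℕ) (hn : 1 ≤ n) (lam ω τ θ δ : ℝ) (hlam : lam < 0) (hω : 0 < ω)
    (hτ : 0 < τ) (hτ' : τ < Real.pi / (2 * ω)) (hδ : 0 < δ)
    (x₀ x₁ : EuclideanSpace ℝ (Fin n))
    (Q : EuclideanSpace ℝ (Fin n) → ℝ)
    (hQreg : ContDiff ℝ (⊤ : ℕ∞) Q) (hQpos : ∀ x, 0 < Q x)
    (hQ : ∀ x, -(1 / 2) * laplacianR Q x + Q x = -lam * Q x ^ ((1 : ℝ) + 4 / n))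
    (u : ℝ → EuclideanSpace ℝ (Fin n) → ℂ)
    (hu : ∀ t x, u t x
      = (((ω * δ / Real.sin (ω * (τ - t))) ^ ((n : ℝ) / 2) : ℝ) : ℂ)
        * Complex.exp (Complex.I * (θ : ℂ)
            + Complex.I * (δ : ℂ) ^ 2 * (ω : ℂ) * ((Real.cos (ω * t) : ℝ) : ℂ)
              / (((Real.cos (ω * τ) : ℝ) : ℂ) * ((Real.sin (ω * (τ - t)) : ℝ) : ℂ))
            - Complex.I * ((ω : ℂ) / 2)
              * ((‖(Real.cos (ω * t))⁻¹ • x - x₁‖ : ℝ) : ℂ) ^ 2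
              * ((Real.cos (ω * t) : ℝ) : ℂ) * ((Real.cos (ω * τ) : ℝ) : ℂ)
              / ((Real.sin (ω * (τ - t)) : ℝ) : ℂ)
            - Complex.I * (ω : ℂ) * ((‖x‖ : ℝ) : ℂ) ^ 2 / 2
              * ((Real.tan (ω * t) : ℝ) : ℂ))
        * ((Q ((ω * δ) • ((Real.sin (ω * (τ - t)))⁻¹ • (x - Real.cos (ω * t) • x₁)
              - ω⁻¹ • x₀)) : ℝ) : ℂ)) :
    ∀ t x, 0 < t → t < τ →
      Complex.I * deriv (fun s => u s x) t + (1 / 2) * laplacianC (u t) x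
        = ((ω : ℂ) ^ 2 * (‖x‖ : ℂ) ^ 2 / 2) * u t x
          + (lam : ℂ) * ((‖u t x‖ ^ ((4 : ℝ) / n) : ℝ) : ℂ) * u t x := by
  intro t x ht0 htτ
  have hωτ : ω * τ < Real.pi / 2 := by
    rw [lt_div_iff₀ (by positivity)] at hτ'
    linarith
  have hC : Real.cos (ω * τ) ≠ 0 := by
    apply ne_of_gt
    apply Real.cos_pos_of_mem_Ioo
    constructor
    · have := mul_pos hω hτ
      linarith [Real.pi_pos]
    · exact hωτ
  have hcos : ∀ s, 0 < s → s < τ → Real.cos (ω * s) ≠ 0 := by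
    intro s h0 h1
    apply ne_of_gt
    apply Real.cos_pos_of_mem_Ioo
    have h2 := mul_pos hω h0
    have h3 := mul_lt_mul_of_pos_left h1 hω
    constructor <;> linarith [Real.pi_pos]
  have hsin : ∀ s, 0 < s → s < τ → 0 < Real.sin (ω * (τ - s)) := by
    intro s h0 h1
    have h2 := mul_pos hω h0
    have h3 := mul_lt_mul_of_pos_left h1 hω
    apply Real.sin_pos_of_pos_of_lt_pi <;> nlinarith [Real.pi_pos]
  have hCs : ∀ s, Real.cos (ω * τ) = Real.cos (ω * s) * Real.cos (ω * (τ - s))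
      - Real.sin (ω * s) * Real.sin (ω * (τ - s)) := by
    intro s
    rw [← Real.cos_add]
    congr 1
    ring
  -- normal form
  have hnf : ∀ s, 0 < s → s < τ → ∀ y, u s y =
      (((ω * δ / Real.sin (ω * (τ - s))) ^ ((n : ℝ) / 2) : ℝ) : ℂ)
      * Complex.exp (Complex.I * (((θ + δ ^ 2 * ω * (Real.cos (ω * s) / Real.sin (ω * (τ - s))) / Real.cos (ω * τ)
          - ω / 2 * ‖x₁‖ ^ 2 * Real.cos (ω * τ) * (Real.cos (ω * s) / Real.sin (ω * (τ - s))))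
        + (-(ω / 2) * (Real.cos (ω * (τ - s)) / Real.sin (ω * (τ - s)))) * ‖y‖ ^ 2
        + inner ℝ ((ω * Real.cos (ω * τ) * (Real.sin (ω * (τ - s)))⁻¹) • x₁) y : ℝ) : ℂ))
      * (Q ((ω * δ / Real.sin (ω * (τ - s))) • y
          + (-(ω * δ * (Real.cos (ω * s) / Real.sin (ω * (τ - s)))) • x₁ - δ • x₀)) : ℂ) := by
    intro s h0 h1 y
    have hc := hcos s h0 h1
    have hS := (hsin s h0 h1).ne'
    rw [hu]
    congr 1
    · congr 2
      have e1 : ‖(Real.cos (ω * s))⁻¹ • y - x₁‖ ^ 2 = (Real.cos (ω * s))⁻¹ ^ 2 * ‖y‖ ^ 2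
          - 2 * ((Real.cos (ω * s))⁻¹ * inner ℝ x₁ y) + ‖x₁‖ ^ 2 := by
        rw [norm_sub_sq_real, norm_smul, mul_pow, inner_smul_left, real_inner_comm]
        simp
      have e2 : (θ + δ ^ 2 * ω * (Real.cos (ω * s) / Real.sin (ω * (τ - s))) / Real.cos (ω * τ)
          - ω / 2 * ‖x₁‖ ^ 2 * Real.cos (ω * τ) * (Real.cos (ω * s) / Real.sin (ω * (τ - s))))
        + (-(ω / 2) * (Real.cos (ω * (τ - s)) / Real.sin (ω * (τ - s)))) * ‖y‖ ^ 2
        + inner ℝ ((ω * Real.cos (ω * τ) * (Real.sin (ω * (τ - s)))⁻¹) • x₁) y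
        = θ + δ ^ 2 * ω * Real.cos (ω * s) / (Real.cos (ω * τ) * Real.sin (ω * (τ - s)))
          - ω / 2 * ‖(Real.cos (ω * s))⁻¹ • y - x₁‖ ^ 2 * Real.cos (ω * s) * Real.cos (ω * τ)
            / Real.sin (ω * (τ - s)) - ω * ‖y‖ ^ 2 / 2 * Real.tan (ω * s) := by
        rw [e1, Real.tan_eq_sin_div_cos, inner_smul_left]
        simp only [conj_trivial]
        have h3 : Real.cos (ω * (τ - s)) = (Real.cos (ω * τ)
          + Real.sin (ω * s) * Real.sin (ω * (τ - s))) / Real.cos (ω * s) := by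
          rw [hCs s]; field_simp; ring
        rw [h3]
        field_simp
        ring
      rw [e2]
      push_cast
      ring
    · congr 2
      rw [smul_sub, smul_smul, smul_sub, smul_smul, smul_smul]
      have : ω * δ * ω⁻¹ = δ := by field_simp
      rw [this]
      module
  set S := Real.sin (ω * (τ - t)) with hSdef
  set c := Real.cos (ω * t) with hcdef
  set C := Real.cos (ω * τ) with hCdef
  set σ := Real.cos (ω * (τ - t)) with hσdef
  have hSpos : 0 < S := hsin t ht0 htτ
  have hSne := hSpos.ne'
  have hk : 0 < ω * δ / S := by positivity
  -- time derivatives of elementary pieces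
  have dlin : HasDerivAt (fun s => ω * (τ - s)) (-ω) t := by
    simpa using ((hasDerivAt_id t).const_sub τ).const_mul ω
  have dS : HasDerivAt (fun s => Real.sin (ω * (τ - s))) (-ω * σ) t := by
    have := dlin.sin
    refine HasDerivAt.congr_deriv this ?_
    ring
  have dσ : HasDerivAt (fun s => Real.cos (ω * (τ - s))) (ω * S) t := by
    have := dlin.cos
    refine HasDerivAt.congr_deriv this ?_
    ring
  have dc : HasDerivAt (fun s => Real.cos (ω * s)) (-ω * Real.sin (ω * t)) t := by
    have h : HasDerivAt (fun s => ω * s) ω t := by simpa using (hasDerivAt_id t).const_mul ω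
    have := h.cos
    refine HasDerivAt.congr_deriv this ?_
    ring
  have hsc : Real.sin (ω * t) ^ 2 + c ^ 2 = 1 := Real.sin_sq_add_cos_sq _
  have hSσ : S ^ 2 + σ ^ 2 = 1 := Real.sin_sq_add_cos_sq _
  have dk : HasDerivAt (fun s => ω * δ / Real.sin (ω * (τ - s))) ((ω * δ / S) * (ω * σ / S)) t := by
    have := (hasDerivAt_const t (ω * δ)).div dS hSne
    refine HasDerivAt.congr_deriv this ?_
    rw [← hSdef]
    field_simp
    ring
  have dinv : HasDerivAt (fun s => (Real.sin (ω * (τ - s)))⁻¹) (ω * σ / S ^ 2) t := by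
    have := dS.inv hSne
    refine HasDerivAt.congr_deriv this ?_
    rw [← hSdef]
    ring
  have dcS : HasDerivAt (fun s => Real.cos (ω * s) / Real.sin (ω * (τ - s))) (ω * C / S ^ 2) t := by
    have := dc.div dS hSne
    refine HasDerivAt.congr_deriv this ?_
    rw [← hSdef, ← hcdef, hCs t]
    ring
  have dσS : HasDerivAt (fun s => Real.cos (ω * (τ - s)) / Real.sin (ω * (τ - s))) (ω / S ^ 2) t := by
    have := dσ.div dS hSne
    refine HasDerivAt.congr_deriv this ?_
    rw [← hSdef, ← hσdef]
    congr 1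
    linear_combination (ω) * hSσ
  have dA : HasDerivAt (fun s => (ω * δ / Real.sin (ω * (τ - s))) ^ ((n : ℝ) / 2))
      ((ω * δ / S) ^ ((n : ℝ) / 2) * ((n : ℝ) / 2 * (ω * σ / S))) t := by
    have := dk.rpow_const (p := (n : ℝ) / 2) (Or.inl hk.ne')
    refine HasDerivAt.congr_deriv this ?_
    rw [← hSdef, Real.rpow_sub_one hk.ne']
    field_simp
  have dP : HasDerivAt (fun s => (θ + δ ^ 2 * ω * (Real.cos (ω * s) / Real.sin (ω * (τ - s))) / C
          - ω / 2 * ‖x₁‖ ^ 2 * C * (Real.cos (ω * s) / Real.sin (ω * (τ - s))))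
        + (-(ω / 2) * (Real.cos (ω * (τ - s)) / Real.sin (ω * (τ - s)))) * ‖x‖ ^ 2
        + inner ℝ ((ω * C * (Real.sin (ω * (τ - s)))⁻¹) • x₁) x)
      ((ω * δ / S) ^ 2 - ω ^ 2 / 2 * (‖x‖ ^ 2 - 2 * inner ℝ x₁ x * C * σ + ‖x₁‖ ^ 2 * C ^ 2) / S ^ 2) t := by
    simp only [inner_smul_left, conj_trivial]
    have := (((((dcS.const_mul (δ ^ 2 * ω)).div_const C).const_add θ).sub
      (dcS.const_mul (ω / 2 * ‖x₁‖ ^ 2 * C))).add ((dσS.const_mul (-(ω / 2))).mul_const (‖x‖ ^ 2))).add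
      ((dinv.const_mul (ω * C)).mul_const (inner ℝ x₁ x))
    refine HasDerivAt.congr_deriv this ?_
    field_simp
    ring
  set V : EuclideanSpace ℝ (Fin n) := (2 * (-(ω / 2) * (σ / S))) • x + (ω * C * S⁻¹) • x₁ with hV
  have dY : HasDerivAt (fun s => (ω * δ / Real.sin (ω * (τ - s))) • x
          + (-(ω * δ * (Real.cos (ω * s) / Real.sin (ω * (τ - s)))) • x₁ - δ • x₀))
      ((-(ω * δ / S)) • V) t := by
    have := (dk.smul_const x).add ((((dcS.const_mul (ω * δ)).neg).smul_const x₁).sub_const (δ • x₀))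
    refine HasDerivAt.congr_deriv this ?_
    rw [hV, smul_add, smul_smul, smul_smul]
    congr 2
    · field_simp
    · field_simp
  have hQd : Differentiable ℝ Q := hQreg.differentiable (by simp)
  set Y := (ω * δ / S) • x + (-(ω * δ * (c / S)) • x₁ - δ • x₀) with hY
  have dQ : HasDerivAt (fun s => Q ((ω * δ / Real.sin (ω * (τ - s))) • x
          + (-(ω * δ * (Real.cos (ω * s) / Real.sin (ω * (τ - s)))) • x₁ - δ • x₀)))
      (-(ω * δ / S) * fderiv ℝ Q Y V) t := by
    have := (hQd Y).hasFDerivAt.comp_hasDerivAt t dY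
    refine HasDerivAt.congr_deriv this ?_
    simp
  set P := (θ + δ ^ 2 * ω * (c / S) / C - ω / 2 * ‖x₁‖ ^ 2 * C * (c / S))
        + (-(ω / 2) * (σ / S)) * ‖x‖ ^ 2 + inner ℝ ((ω * C * S⁻¹) • x₁) x with hP
  have dU := (dA.ofReal_comp.mul ((dP.ofReal_comp.const_mul Complex.I).cexp)).mul dQ.ofReal_comp
  have hev : ∀ᶠ s in nhds t, 0 < s ∧ s < τ := Ioo_mem_nhds ht0 htτ
  have hderiv := (dU.congr_of_eventuallyEq (hev.mono fun s hs => hnf s hs.1 hs.2 x)).deriv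
  have hlap := (congrArg (fun f => laplacianC f x) (funext (hnf t ht0 htτ))).trans
    (aux_lap _ _ _ _ _ _ Q hQreg x)
  simp only [← hSdef, ← hcdef, ← hσdef] at hlap
  have hut := hnf t ht0 htτ x
  rw [← hSdef, ← hcdef, ← hσdef, ← hP, ← hY] at hut
  simp only [Pi.mul_apply] at hderiv
  rw [← hSdef, ← hcdef, ← hσdef, ← hP, ← hY] at hderiv
  rw [← hP, ← hY, ← hV] at hlap
  have hlQ : laplacianR Q Y = 2 * Q Y + 2 * lam * (Q Y * Q Y ^ ((4 : ℝ) / n)) := by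
    have h1 := hQ Y
    rw [Real.rpow_add (hQpos Y), Real.rpow_one] at h1
    linear_combination (-2) * h1
  have hn0 : (n : ℝ) ≠ 0 := by positivity
  have hnorm : ‖u t x‖ ^ ((4 : ℝ) / n) = (ω * δ / S) ^ 2 * Q Y ^ ((4 : ℝ) / n) := by
    rw [hut, norm_mul, norm_mul, Complex.norm_real, Complex.norm_real, mul_comm Complex.I,
      Complex.norm_exp_ofReal_mul_I, mul_one, Real.norm_of_nonneg (by positivity),
      Real.norm_of_nonneg (hQpos Y).le, Real.mul_rpow (by positivity) (hQpos Y).le,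
      ← Real.rpow_mul hk.le]
    congr 1
    rw [show (n : ℝ) / 2 * (4 / n) = (2 : ℕ) by field_simp; norm_num, Real.rpow_natCast]
  have hVn : ‖V‖ ^ 2 = ω ^ 2 * (σ ^ 2 * ‖x‖ ^ 2 - 2 * inner ℝ x₁ x * C * σ + ‖x₁‖ ^ 2 * C ^ 2) / S ^ 2 := by
    rw [hV, norm_add_sq_real, norm_smul, norm_smul, mul_pow, mul_pow, inner_smul_left,
      inner_smul_right, real_inner_comm]
    simp only [Real.norm_eq_abs, sq_abs, conj_trivial]
    field_simp
    ring
  rw [hderiv, hlap, hnorm, hut, hlQ, hVn]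
  have hS2 : (S : ℂ) ≠ 0 := by exact_mod_cast hSne
  have hσ2 : (σ : ℂ) ^ 2 = 1 - (S : ℂ) ^ 2 := by
    have : σ ^ 2 = 1 - S ^ 2 := by linarith
    exact_mod_cast this
  push_cast
  rw [hσ2]
  generalize Complex.exp (Complex.I * (P : ℂ)) = E
  generalize (((ω * δ / S) ^ ((n : ℝ) / 2) : ℝ) : ℂ) = A
  generalize (Q Y : ℂ) = q
  have hSS : (S : ℂ) ^ 2 * (S : ℂ)⁻¹ ^ 2 = 1 := by field_simp
  linear_combination (A * ω ^ 2 * (S : ℂ)⁻¹ ^ 2 * E * q * (σ * (inner ℝ x₁ x : ℝ) * C + δ ^ 2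
    - (‖x‖ : ℂ) ^ 2 / 2 - C ^ 2 * (‖x₁‖ : ℂ) ^ 2 / 2)) * Complex.I_sq
    + (A * ω ^ 2 * E * (‖x‖ : ℂ) ^ 2 * q / 2) * hSS
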